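/- (Matrix Capelli identity, symmetric form.) Let R be a Hecke symmetry with parameter q such that j_q ≠ 0 for 2 ≤ j ≤ k, let M and D be N×N matrices with entries in a unital associative ℂ-algebra 𝒜 satisfying the Reflection Equation R M₁ R M₁ = M₁ R M₁ R, the relation R⁻¹ D₁ R⁻¹ D₁ = D₁ R⁻¹ D₁ R⁻¹, and the permutation relations D₁ R M₁ = R M₁ R⁻¹ D₁ R⁻¹ + I, and set L := M D. Then for every k ≥ 1, as an identity of N^k×N^k matrices over 𝒜: S^(k) L_{1̄} (L_{2̄} − q⁻¹·I) (L_{3̄} − q⁻²·2_q·I) ⋯ (L_{k̄} − q^{−(k−1)}·(k−1)_q·I) S^(k) = q^{−k(k−1)} S^(k) M_{1̄} ⋯ M_{k̄} D_{k̄} ⋯ D_{1̄}. -/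

import Mathlib

open Matrix BigOperators

noncomputable section

/-- An `N² × N²` complex matrix, viewed as an operator on `ℂ^N ⊗ ℂ^N`. -/
abbrev RMat (N : ℕ) := Matrix (Fin N × Fin N) (Fin N × Fin N) ℂ

/-- A matrix on the `k`-th tensor power of `ℂ^N`, with entries in `A`. -/
abbrev TMat (N k : ℕ) (A : Type _) := Matrix (Fin k → Fin N) (Fin k → Fin N) A

/-- The `q`-number `j_q = (q^j - q^{-j})/(q - q^{-1})`. -/
def qNum (q : ℂ) (j : ℕ) : ℂ := (q ^ j - q⁻¹ ^ j) / (q - q⁻¹)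

/-- Embedding of an `N²×N²` matrix `R` into the `k`-th tensor power,
acting in the (0-based) tensor factors `i` and `i+1`.  The paper's `R_i`
(1-based) is `embR k R (i-1)`. -/
def embR {N : ℕ} (k : ℕ) (R : RMat N) (i : ℕ) : TMat N k ℂ := fun f g =>
  if h : i + 1 < k then
    if ∀ j : Fin k, j.val ≠ i → j.val ≠ i + 1 → f j = g j then
      R (f ⟨i, Nat.lt_of_succ_lt h⟩, f ⟨i + 1, h⟩) (g ⟨i, Nat.lt_of_succ_lt h⟩, g ⟨i + 1, h⟩)
    else 0
  else (1 : TMat N k ℂ) f g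

/-- `X ⊗ I^{⊗(k-1)}` : the first copy `X_{1̄}` of an `N×N` matrix over `A`. -/
def emb1 {N : ℕ} (k : ℕ) {A : Type _} [Ring A] (X : Matrix (Fin N) (Fin N) A) :
    TMat N k A := fun f g =>
  if h : 0 < k then
    if ∀ j : Fin k, j.val ≠ 0 → f j = g j then X (f ⟨0, h⟩) (g ⟨0, h⟩) else 0
  else (1 : TMat N k A) f g

/-- Lift a complex matrix to a matrix over the `ℂ`-algebra `A`. -/
def liftC {N k : ℕ} (A : Type _) [Ring A] [Algebra ℂ A] (X : TMat N k ℂ) : TMat N k A :=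
  X.map (algebraMap ℂ A)

/-- The copies `X_{1̄}, X_{2̄}, …` of `X` in the `k`-th tensor power:
`copyX k R Rinv X i` is the paper's `X_{\overline{i+1}}`, i.e.
`X_{1̄} = X ⊗ I^{⊗(k-1)}` and `X_{\overline{i+1}} = R_i X_{ī} R_i⁻¹`. -/
def copyX {N : ℕ} (k : ℕ) (R Rinv : RMat N) {A : Type _} [Ring A] [Algebra ℂ A]
    (X : Matrix (Fin N) (Fin N) A) : ℕ → TMat N k A
  | 0 => emb1 k X
  | i + 1 => liftC A (embR k R i) * copyX k R Rinv X i * liftC A (embR k Rinv i)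

/-- The `R`-skew-symmetrizers, on the ambient `k`-th tensor power:
`Asym k R q j` is `A^{(j)}` (acting in the first `j` factors). -/
def Asym {N : ℕ} (k : ℕ) (R : RMat N) (q : ℂ) : ℕ → TMat N k ℂ
  | 0 => 1
  | 1 => 1
  | j + 2 =>
      (qNum q (j + 2))⁻¹ •
        (Asym k R q (j + 1) *
          ((q ^ (j + 1)) • (1 : TMat N k ℂ) - (qNum q (j + 1)) • embR k R j) *
          Asym k R q (j + 1))

/-- The `R`-symmetrizers, on the ambient `k`-th tensor power:
`Ssym k R q j` is `S^{(j)}` (acting in the first `j` factors). -/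
def Ssym {N : ℕ} (k : ℕ) (R : RMat N) (q : ℂ) : ℕ → TMat N k ℂ
  | 0 => 1
  | 1 => 1
  | j + 2 =>
      (qNum q (j + 2))⁻¹ •
        (Ssym k R q (j + 1) *
          ((q⁻¹ ^ (j + 1)) • (1 : TMat N k ℂ) + (qNum q (j + 1)) • embR k R j) *
          Ssym k R q (j + 1))

/-- The braid relation `R₁₂ R₂₃ R₁₂ = R₂₃ R₁₂ R₂₃` on `(ℂ^N)^{⊗3}`. -/
def IsBraiding {N : ℕ} (R : RMat N) : Prop :=
  embR 3 R 0 * embR 3 R 1 * embR 3 R 0 = embR 3 R 1 * embR 3 R 0 * embR 3 R 1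

/-- The Hecke condition `(q·I − R)(q⁻¹·I + R) = 0`. -/
def HeckeCond {N : ℕ} (R : RMat N) (q : ℂ) : Prop :=
  (q • (1 : RMat N) - R) * (q⁻¹ • (1 : RMat N) + R) = 0

/-- The Reflection Equation `R M₁ R M₁ = M₁ R M₁ R` (on `(ℂ^N)^{⊗2}`,
with entries in `A`). -/
def RERel {N : ℕ} (R : RMat N) {A : Type _} [Ring A] [Algebra ℂ A]
    (M : Matrix (Fin N) (Fin N) A) : Prop :=
  liftC A (embR 2 R 0) * emb1 2 M * liftC A (embR 2 R 0) * emb1 2 M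
    = emb1 2 M * liftC A (embR 2 R 0) * emb1 2 M * liftC A (embR 2 R 0)

/-- The relation `R⁻¹ D₁ R⁻¹ D₁ = D₁ R⁻¹ D₁ R⁻¹` on the matrix `D`,
where `Rinv = R⁻¹`. -/
def DDRel {N : ℕ} (Rinv : RMat N) {A : Type _} [Ring A] [Algebra ℂ A]
    (D : Matrix (Fin N) (Fin N) A) : Prop :=
  liftC A (embR 2 Rinv 0) * emb1 2 D * liftC A (embR 2 Rinv 0) * emb1 2 D
    = emb1 2 D * liftC A (embR 2 Rinv 0) * emb1 2 D * liftC A (embR 2 Rinv 0)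

/-- The permutation relations `D₁ R M₁ = R M₁ R⁻¹ D₁ R⁻¹ + I`, where `Rinv = R⁻¹`. -/
def PermRel {N : ℕ} (R Rinv : RMat N) {A : Type _} [Ring A] [Algebra ℂ A]
    (M D : Matrix (Fin N) (Fin N) A) : Prop :=
  emb1 2 D * liftC A (embR 2 R 0) * emb1 2 M
    = liftC A (embR 2 R 0) * emb1 2 M * liftC A (embR 2 Rinv 0) * emb1 2 D *
        liftC A (embR 2 Rinv 0) + 1

/-- `Ψ` is the skew-inverse of `R`:  `Σ_{j,b} R^{ij}_{ab} Ψ^{bc}_{jd} = δ^i_d δ^c_a`. -/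
def SkewInv {N : ℕ} (R Ψ : RMat N) : Prop :=
  ∀ i a c d : Fin N,
    (∑ j : Fin N, ∑ b : Fin N, R (i, j) (a, b) * Ψ (b, c) (j, d))
      = if i = d ∧ c = a then 1 else 0

/-- The matrix `C`, `C^c_d = Σ_i Ψ^{ic}_{id}`. -/
def Cmat {N : ℕ} (Ψ : RMat N) : Matrix (Fin N) (Fin N) ℂ :=
  fun c d => ∑ i : Fin N, Ψ (i, c) (i, d)

/-- The `R`-trace over all `k` tensor factors: `⟨X⟩_{1…k} = Tr(C^{⊗k} X)`. -/
def rTr {N k : ℕ} {A : Type _} [Ring A] [Algebra ℂ A] (C : Matrix (Fin N) (Fin N) ℂ)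
    (X : TMat N k A) : A :=
  ∑ f : Fin k → Fin N, ∑ g : Fin k → Fin N, (∏ j : Fin k, C (f j) (g j)) • X g f

/-- The chain `X_{1̄} X_{2̄} ⋯ X_{n̄}`. -/
def upChain {N : ℕ} (k : ℕ) (R Rinv : RMat N) {A : Type _} [Ring A] [Algebra ℂ A]
    (X : Matrix (Fin N) (Fin N) A) (n : ℕ) : TMat N k A :=
  ((List.range n).map (copyX k R Rinv X)).prod

/-- The reversed chain `X_{n̄} X_{\overline{n-1}} ⋯ X_{1̄}`. -/
def downChain {N : ℕ} (k : ℕ) (R Rinv : RMat N) {A : Type _} [Ring A] [Algebra ℂ A]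
    (X : Matrix (Fin N) (Fin N) A) (n : ℕ) : TMat N k A :=
  ((List.range n).reverse.map (copyX k R Rinv X)).prod

/-- The Capelli chain `L_{1̄}(L_{2̄} + q·1_q I)(L_{3̄} + q²·2_q I) ⋯ (L_{n̄} + q^{n-1}·(n-1)_q I)`
(note `0_q = 0`). -/
def capChainA {N : ℕ} (k : ℕ) (R Rinv : RMat N) (q : ℂ) {A : Type _} [Ring A] [Algebra ℂ A]
    (L : Matrix (Fin N) (Fin N) A) (n : ℕ) : TMat N k A :=
  ((List.range n).map
    (fun i => copyX k R Rinv L i + ((q ^ i) * qNum q i) • (1 : TMat N k A))).prod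

/-- The symmetric Capelli chain
`L_{1̄}(L_{2̄} - q⁻¹·1_q I) ⋯ (L_{n̄} - q^{-(n-1)}·(n-1)_q I)`. -/
def capChainS {N : ℕ} (k : ℕ) (R Rinv : RMat N) (q : ℂ) {A : Type _} [Ring A] [Algebra ℂ A]
    (L : Matrix (Fin N) (Fin N) A) (n : ℕ) : TMat N k A :=
  ((List.range n).map
    (fun i => copyX k R Rinv L i - ((q⁻¹ ^ i) * qNum q i) • (1 : TMat N k A))).prod

/-- The descending chain `R_{a→b} = R_a R_{a-1} ⋯ R_b` (1-based indices;
identity when `b > a`). -/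
def rChainDesc {N : ℕ} (k : ℕ) (R : RMat N) (a b : ℕ) : TMat N k ℂ :=
  ((List.range' b (a + 1 - b)).reverse.map (fun j => embR k R (j - 1))).prod

/-- The ascending chain `R_{b→a} = R_b R_{b+1} ⋯ R_a` (1-based indices;
identity when `b > a`). -/
def rChainAsc {N : ℕ} (k : ℕ) (R : RMat N) (b a : ℕ) : TMat N k ℂ :=
  ((List.range' b (a + 1 - b)).map (fun j => embR k R (j - 1))).prod

section AbstractCapelli

theorem semiconj_inv {B : Type*} [Ring B] {a b u c d : B} (hab : a * b = 1) (hdc : d * c = 1)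
    (h : SemiconjBy u a c) : SemiconjBy u b d := by
  have h' : u * a = c * u := h
  show u * b = d * u
  calc u * b = d * c * u * b := by rw [hdc, one_mul]
    _ = d * (c * u) * b := by simp only [mul_assoc]
    _ = d * u * (a * b) := by rw [← h']; simp only [mul_assoc]
    _ = d * u := by rw [hab, mul_one]

variable {B : Type*} [Ring B] [Algebra ℂ B]

/-- Abstract Hecke-type data: a family of invertible braiding generators. -/
structure HkData (q : ℂ) (K : ℕ) (r ri : ℕ → B) : Prop where
  inv : ∀ i, r i * ri i = 1
  inv' : ∀ i, ri i * r i = 1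
  braid : ∀ i, i + 2 < K → r i * r (i+1) * r i = r (i+1) * r i * r (i+1)
  far : ∀ i j, i + 1 < j → Commute (r i) (r j)
  hecke : ∀ i, i + 1 < K → r i * r i = (q - q⁻¹) • r i + 1

/-- A family of copies. -/
structure CpData (r ri : ℕ → B) (x : ℕ → B) : Prop where
  succ : ∀ i, x (i+1) = r i * x i * ri i
  comm0 : ∀ i, 1 ≤ i → Commute (r i) (x 0)

variable {q : ℂ} {K : ℕ} {r ri : ℕ → B}

theorem HkData.cinv (H : HkData q K r ri) {a : B} {i : ℕ} (h : Commute a (r i)) :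
    Commute a (ri i) := semiconj_inv (H.inv i) (H.inv' i) h

theorem HkData.comm_hi (H : HkData q K r ri) {x : ℕ → B} (X : CpData r ri x) :
    ∀ j i, j < i → Commute (r i) (x j) := by
  intro j
  induction j with
  | zero => intro i hi; exact X.comm0 i hi
  | succ j ih =>
    intro i hi
    rw [X.succ]
    have h1 : Commute (r i) (r j) := (H.far j i hi).symm
    exact (h1.mul_right (ih i (by omega))).mul_right (H.cinv h1)

theorem HkData.rx (H : HkData q K r ri) {x : ℕ → B} (X : CpData r ri x) (i : ℕ) :
    r i * x i = x (i+1) * r i := by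
  rw [X.succ, mul_assoc, H.inv', mul_one]

theorem HkData.rix (H : HkData q K r ri) {x : ℕ → B} (X : CpData r ri x) (i : ℕ) :
    ri i * x (i+1) = x i * ri i := by
  rw [X.succ, ← mul_assoc, ← mul_assoc, H.inv', one_mul]

theorem HkData.u_r (H : HkData q K r ri) {i : ℕ} (hi : i + 2 < K) :
    SemiconjBy (r i * r (i+1)) (r i) (r (i+1)) := by
  show _ = _
  rw [H.braid i hi, mul_assoc]

theorem HkData.u_ri (H : HkData q K r ri) {i : ℕ} (hi : i + 2 < K) :
    SemiconjBy (r i * r (i+1)) (ri i) (ri (i+1)) :=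
  semiconj_inv (H.inv _) (H.inv' _) (H.u_r hi)

theorem HkData.u_x (H : HkData q K r ri) {x : ℕ → B} (X : CpData r ri x) {i : ℕ} :
    SemiconjBy (r i * r (i+1)) (x i) (x (i+1)) := by
  show _ = _
  rw [mul_assoc, (H.comm_hi X i (i+1) (by omega)).eq, ← mul_assoc, H.rx X, mul_assoc]

theorem HkData.u_cancel (H : HkData q K r ri) {i : ℕ} {a b c d : B}
    (h1 : SemiconjBy (r i * r (i+1)) a c) (h2 : SemiconjBy (r i * r (i+1)) b d)
    (h : a = b) : c = d := by
  have e1 : (r i * r (i+1)) * a = c * (r i * r (i+1)) := h1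
  have e2 : (r i * r (i+1)) * b = d * (r i * r (i+1)) := h2
  rw [h, e2] at e1
  have e3 : (r i * r (i+1)) * (ri (i+1) * ri i) = 1 := by
    rw [mul_assoc, ← mul_assoc (r (i+1)), H.inv, one_mul, H.inv]
  calc c = c * ((r i * r (i+1)) * (ri (i+1) * ri i)) := by rw [e3, mul_one]
    _ = d * ((r i * r (i+1)) * (ri (i+1) * ri i)) := by
        rw [← mul_assoc c, ← mul_assoc d, e1]
    _ = d := by rw [e3, mul_one]

theorem HkData.comm_lo (H : HkData q K r ri) {x : ℕ → B} (X : CpData r ri x) (i : ℕ) :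
    ∀ j, i + 1 < j → j < K → Commute (r i) (x j) := by
  intro j hj
  induction j, hj using Nat.le_induction with
  | base =>
    intro hK
    -- `x (i+2) = v * x i * v⁻¹` with `v = r (i+1) * r i`
    have hv : r i * (r (i+1) * r i) = (r (i+1) * r i) * r (i+1) := by
      rw [← mul_assoc, H.braid i (by omega)]
    have hvi : SemiconjBy (ri i * ri (i+1)) (r i) (r (i+1)) := by
      show _ = _
      have hv' : (r (i+1) * r i) * (ri i * ri (i+1)) = 1 := by
        rw [mul_assoc, ← mul_assoc (r i), H.inv, one_mul, H.inv]
      have hv'' : (ri i * ri (i+1)) * (r (i+1) * r i) = 1 := by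
        rw [mul_assoc, ← mul_assoc (ri (i+1)), H.inv', one_mul, H.inv']
      calc (ri i * ri (i+1)) * r i
          = (ri i * ri (i+1)) * (r i * (r (i+1) * r i)) * (ri i * ri (i+1)) := by
            rw [mul_assoc _ (r i * _), mul_assoc (r i), hv', mul_one]
        _ = ((ri i * ri (i+1)) * (r (i+1) * r i)) * r (i+1) * (ri i * ri (i+1)) := by
            rw [hv]; simp only [mul_assoc]
        _ = _ := by rw [hv'', one_mul]
    have hx : x (i+2) = (r (i+1) * r i) * x i * (ri i * ri (i+1)) := by
      rw [X.succ (i+1), X.succ i]; simp only [mul_assoc]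
    have h3 : SemiconjBy ((r (i+1) * r i) * x i * (ri i * ri (i+1))) (r i) (r i) := by
      refine SemiconjBy.mul_left (SemiconjBy.mul_left (y := r (i+1)) ?_ ?_) hvi
      · exact hv.symm
      · exact (H.comm_hi X i (i+1) (by omega)).symm
    show Commute (r i) (x (i+2))
    rw [hx]
    exact Commute.symm h3
  | succ j hj ih =>
    intro hK
    have h1 : Commute (r i) (r j) := H.far i j (by omega)
    rw [X.succ]
    exact (h1.mul_right (ih (by omega))).mul_right (H.cinv h1)

/-- Abstract data for the Capelli identity. -/
structure CapData (q : ℂ) (K : ℕ) (r ri m d : ℕ → B) : Prop where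
  H : HkData q K r ri
  Mc : CpData r ri m
  Dc : CpData r ri d
  re0 : 1 < K → r 0 * m 0 * r 0 * m 0 = m 0 * r 0 * m 0 * r 0
  dd0 : 1 < K → ri 0 * d 0 * ri 0 * d 0 = d 0 * ri 0 * d 0 * ri 0
  pm0 : 1 < K → d 0 * r 0 * m 0 = r 0 * m 0 * ri 0 * d 0 * ri 0 + 1

variable {m d : ℕ → B}

theorem CapData.re (T : CapData q K r ri m d) : ∀ i, i + 1 < K →
    r i * m i * r i * m i = m i * r i * m i * r i := by
  intro i
  induction i with
  | zero => exact T.re0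
  | succ i ih =>
    intro h
    have a := T.H.u_r (i := i) (by omega)
    have b := T.H.u_x T.Mc (i := i)
    exact T.H.u_cancel (((a.mul_right b).mul_right a).mul_right b)
      (((b.mul_right a).mul_right b).mul_right a) (ih (by omega))

theorem CapData.dd (T : CapData q K r ri m d) : ∀ i, i + 1 < K →
    ri i * d i * ri i * d i = d i * ri i * d i * ri i := by
  intro i
  induction i with
  | zero => exact T.dd0
  | succ i ih =>
    intro h
    have a := T.H.u_ri (i := i) (by omega)
    have b := T.H.u_x T.Dc (i := i)
    exact T.H.u_cancel (((a.mul_right b).mul_right a).mul_right b)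
      (((b.mul_right a).mul_right b).mul_right a) (ih (by omega))

theorem CapData.pm (T : CapData q K r ri m d) : ∀ i, i + 1 < K →
    d i * r i * m i = r i * m i * ri i * d i * ri i + 1 := by
  intro i
  induction i with
  | zero => exact T.pm0
  | succ i ih =>
    intro h
    have a := T.H.u_ri (i := i) (by omega)
    have b := T.H.u_x T.Dc (i := i)
    have c := T.H.u_r (i := i) (by omega)
    have e := T.H.u_x T.Mc (i := i)
    exact T.H.u_cancel ((b.mul_right c).mul_right e)
      (((((c.mul_right e).mul_right a).mul_right b).mul_right a).add_right
        (SemiconjBy.one_right _)) (ih (by omega))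

theorem CapData.mm_comm (T : CapData q K r ri m d) (i : ℕ) (hi : i + 1 < K) :
    Commute (r i) (m i * m (i+1)) := by
  show _ = _
  rw [T.Mc.succ]
  calc r i * (m i * (r i * m i * ri i)) = (r i * m i * r i * m i) * ri i := by
        simp only [mul_assoc]
    _ = m i * r i * m i * (r i * ri i) := by rw [T.re i hi]; simp only [mul_assoc]
    _ = m i * r i * m i * (ri i * r i) := by rw [T.H.inv, T.H.inv']
    _ = _ := by simp only [mul_assoc]

theorem CapData.dd_comm (T : CapData q K r ri m d) (i : ℕ) (hi : i + 1 < K) :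
    Commute (r i) (d (i+1) * d i) := by
  show _ = _
  rw [T.Dc.succ]
  calc r i * (r i * d i * ri i * d i)
      = r i * r i * (d i * ri i * d i * ri i) * r i := by
        rw [mul_assoc _ _ (r i), mul_assoc _ (ri i) (r i), T.H.inv', mul_one]
        simp only [mul_assoc]
    _ = r i * (r i * ri i) * d i * ri i * d i * r i := by
        rw [← T.dd i hi]; simp only [mul_assoc]
    _ = _ := by rw [T.H.inv, mul_one]

theorem CapData.dd2 (T : CapData q K r ri m d) (i : ℕ) (hi : i + 1 < K) :
    d i * ri i * d i = d (i+1) * d i * ri i := by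
  rw [T.Dc.succ]
  calc d i * ri i * d i = r i * ri i * d i * ri i * d i := by rw [T.H.inv, one_mul]
    _ = r i * (ri i * d i * ri i * d i) := by simp only [mul_assoc]
    _ = _ := by rw [T.dd i hi]; simp only [mul_assoc]

/-- Ascending product. -/
def upP (m : ℕ → B) : ℕ → B
  | 0 => 1
  | n + 1 => upP m n * m n

/-- Descending product. -/
def dnP (d : ℕ → B) : ℕ → B
  | 0 => 1
  | n + 1 => d n * dnP d n

/-- Coefficients of the symmetric Capelli chain. -/
def cf (q : ℂ) (i : ℕ) : ℂ := (q⁻¹ ^ i) * qNum q i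

/-- Capelli product. -/
def cpP (q : ℂ) (m d : ℕ → B) : ℕ → B
  | 0 => 1
  | n + 1 => cpP q m d n * (m n * d n - cf q n • (1 : B))

/-- Abstract symmetrizers. -/
def symP (q : ℂ) (r : ℕ → B) : ℕ → B
  | 0 => 1
  | 1 => 1
  | j + 2 =>
      (qNum q (j + 2))⁻¹ •
        (symP q r (j + 1) *
          ((q⁻¹ ^ (j + 1)) • (1 : B) + (qNum q (j + 1)) • r j) *
          symP q r (j + 1))

theorem qNum_one {q : ℂ} (h : q - q⁻¹ ≠ 0) : qNum q 1 = 1 := by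
  simp [qNum, div_self h]

theorem qNum_succ {q : ℂ} (hq : q ≠ 0) (h : q - q⁻¹ ≠ 0) (n : ℕ) :
    qNum q (n+1) = q⁻¹ ^ n + q * qNum q n := by
  have hq' : q * q⁻¹ = 1 := mul_inv_cancel₀ hq
  unfold qNum
  rw [div_eq_iff h, add_mul, mul_assoc, div_mul_cancel₀ _ h]
  ring

theorem cf_succ {q : ℂ} (hq : q ≠ 0) (h : q - q⁻¹ ≠ 0) (n : ℕ) :
    cf q (n+1) = q⁻¹ ^ (2*n+1) + cf q n := by
  have hq' : q⁻¹ * q = 1 := inv_mul_cancel₀ hq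
  unfold cf
  rw [qNum_succ hq h]
  linear_combination q⁻¹ ^ n * qNum q n * hq'

theorem HkData.dn_hi (H : HkData q K r ri) (X : CpData r ri d) :
    ∀ n i, n ≤ i → Commute (r i) (dnP d n) := by
  intro n
  induction n with
  | zero => intro i _; exact Commute.one_right _
  | succ n ih => intro i hi; exact (H.comm_hi X n i hi).mul_right (ih i (by omega))

theorem CapData.dn_comm (T : CapData q K r ri m d) :
    ∀ n, n ≤ K → ∀ i, i + 1 < n → Commute (r i) (dnP d n) := by
  intro n
  induction n with
  | zero => intro _ i hi; omega
  | succ n ih =>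
    intro hn i hi
    rcases Nat.lt_or_ge (i+1) n with h | h
    · exact (T.H.comm_lo T.Dc i n h (by omega)).mul_right (ih (by omega) i h)
    · obtain rfl : n = i + 1 := by omega
      have h1 : dnP d (i+1+1) = d (i+1) * d i * dnP d i := by
        simp only [dnP, mul_assoc]
      rw [h1]
      exact (T.dd_comm i (by omega)).mul_right (T.H.dn_hi T.Dc i i le_rfl)

theorem HkData.up_hi (H : HkData q K r ri) (X : CpData r ri m) :
    ∀ n i, n ≤ i → Commute (r i) (upP m n) := by
  intro n
  induction n with
  | zero => intro i _; exact Commute.one_right _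
  | succ n ih => intro i hi; exact (ih i (by omega)).mul_right (H.comm_hi X n i hi)

theorem CapData.up_comm (T : CapData q K r ri m d) :
    ∀ n, n ≤ K → ∀ i, i + 1 < n → Commute (r i) (upP m n) := by
  intro n
  induction n with
  | zero => intro _ i hi; omega
  | succ n ih =>
    intro hn i hi
    rcases Nat.lt_or_ge (i+1) n with h | h
    · exact (ih (by omega) i h).mul_right (T.H.comm_lo T.Mc i n h (by omega))
    · obtain rfl : n = i + 1 := by omega
      have h1 : upP m (i+1+1) = upP m i * (m i * m (i+1)) := by
        simp only [upP, mul_assoc]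
      rw [h1]
      exact (T.H.up_hi T.Mc i i le_rfl).mul_right (T.mm_comm i (by omega))

/-- An element absorbed by generators is absorbed by inverses. -/
theorem HkData.ri_abs (H : HkData q K r ri) (hq : q ≠ 0) {E : B} {i : ℕ}
    (h : r i * E = q • E) : ri i * E = q⁻¹ • E := by
  have h1 : ri i * (r i * E) = E := by rw [← mul_assoc, H.inv', one_mul]
  rw [h, mul_smul_comm] at h1
  rw [← h1, smul_smul, inv_mul_cancel₀ hq, one_smul, h1]

/-- The key lemma. -/
theorem CapData.key (T : CapData q K r ri m d) (hq : q ≠ 0) (h2 : q - q⁻¹ ≠ 0) (E : B) :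
    ∀ n, n < K → (∀ i, i < n → r i * E = q • E) →
    dnP d n * (m n * d n) * E
      = q⁻¹ ^ (2*n) • (m n * dnP d (n+1) * E) + cf q n • (dnP d n * E) := by
  intro n
  induction n with
  | zero => intro _ _; simp [dnP, cf, qNum]
  | succ n ih =>
    intro hn hE
    have IH := ih (by omega) (fun i hi => hE i (by omega))
    have hr : r n * E = q • E := hE n (by omega)
    have hri := T.H.ri_abs hq hr
    have hc : Commute (r n) (dnP d n) := T.H.dn_hi T.Dc n n le_rfl
    have hc' : Commute (ri n) (dnP d n) := (T.H.cinv hc.symm).symm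
    have hmn : m (n+1) = r n * m n * ri n := T.Mc.succ n
    have hpm := T.pm n (by omega)
    have hdd := T.dd2 n (by omega)
    have e1 : dnP d (n+1) * (m (n+1) * d (n+1)) * E
        = q⁻¹ • (d n * r n * (dnP d n * (m n * d n) * E)) := by
      calc dnP d (n+1) * (m (n+1) * d (n+1)) * E
          = d n * (dnP d n * r n) * m n * (ri n * d (n+1)) * E := by
            rw [hmn, dnP]; simp only [mul_assoc]
        _ = d n * (r n * dnP d n) * m n * d n * (ri n * E) := by
            rw [T.H.rix T.Dc, hc.eq]; simp only [mul_assoc]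
        _ = _ := by rw [hri]; simp only [mul_assoc, mul_smul_comm]
    have e2 : d n * r n * (m n * dnP d (n+1) * E)
        = q⁻¹ • (m (n+1) * dnP d (n+2) * E) + dnP d (n+1) * E := by
      calc d n * r n * (m n * dnP d (n+1) * E) = (d n * r n * m n) * dnP d (n+1) * E := by
            simp only [mul_assoc]
        _ = m (n+1) * (d n * ri n * d n) * dnP d n * E + dnP d (n+1) * E := by
            rw [hpm, hmn]; simp only [dnP, add_mul, one_mul, mul_assoc]
        _ = m (n+1) * d (n+1) * d n * (ri n * dnP d n) * E + dnP d (n+1) * E := by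
            rw [hdd]; simp only [mul_assoc]
        _ = m (n+1) * d (n+1) * d n * dnP d n * (ri n * E) + dnP d (n+1) * E := by
            rw [hc'.eq]; simp only [mul_assoc]
        _ = _ := by rw [hri]; simp only [dnP, mul_assoc, mul_smul_comm]
    have e3 : d n * r n * (dnP d n * E) = q • (dnP d (n+1) * E) := by
      calc d n * r n * (dnP d n * E) = d n * (r n * dnP d n) * E := by simp only [mul_assoc]
        _ = d n * dnP d n * (r n * E) := by rw [hc.eq]; simp only [mul_assoc]
        _ = _ := by rw [hr]; simp only [dnP, mul_assoc, mul_smul_comm]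
    rw [e1, IH, mul_add, mul_smul_comm, mul_smul_comm, e2, e3, cf_succ hq h2]
    have hq' : q⁻¹ * q = 1 := inv_mul_cancel₀ hq
    simp only [smul_add, smul_smul, add_smul, add_assoc]
    congr 1
    · congr 1; ring
    · congr 1
      · congr 1; ring
      · congr 1; linear_combination cf q n * hq'

theorem comm_symP {a : B} : ∀ n, (∀ i, i + 1 < n → Commute a (r i)) →
    Commute a (symP q r n)
  | 0, _ => Commute.one_right _
  | 1, _ => Commute.one_right _
  | n+2, h => by
    have h1 : Commute a (symP q r (n+1)) := comm_symP (n+1) (fun i hi => h i (by omega))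
    rw [symP]
    refine Commute.smul_right (Commute.mul_right (h1.mul_right ?_) h1) _
    exact ((Commute.one_right a).smul_right _).add_right ((h n (by omega)).smul_right _)

theorem symP_succ_absorb (hn : ∀ n, 1 ≤ n → n ≤ K → symP q r n * symP q r n = symP q r n) :
    ∀ n, n ≤ K → symP q r (n+1) * symP q r n = symP q r (n+1) ∧
      symP q r n * symP q r (n+1) = symP q r (n+1)
  | 0, _ => by simp [symP]
  | n+1, h => by
    have h1 := hn (n+1) (by omega) h
    constructor
    · rw [symP, smul_mul_assoc, mul_assoc, h1]
    · rw [symP, mul_smul_comm, ← mul_assoc, ← mul_assoc, h1]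

/-- Full properties of symmetrizers. -/
theorem HkData.symP_props (H : HkData q K r ri) (hq : q ≠ 0) (h2 : q - q⁻¹ ≠ 0)
    (hK : ∀ j, 2 ≤ j → j ≤ K → qNum q j ≠ 0) :
    ∀ n, n ≤ K → (∀ i, i + 1 < n → r i * symP q r n = q • symP q r n ∧
        symP q r n * r i = q • symP q r n) ∧ symP q r n * symP q r n = symP q r n := by
  intro n
  induction n using Nat.strong_induction_on with
  | _ n IH =>
  match n with
  | 0 => intro _; exact ⟨fun i hi => by omega, by simp [symP]⟩
  | 1 => intro _; exact ⟨fun i hi => by omega, by simp [symP]⟩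
  | n+2 =>
    intro hn
    obtain ⟨hab, hid⟩ := IH (n+1) (by omega) (by omega)
    have hne := hK (n+2) (by omega) hn
    set S := symP q r (n+1) with hS
    set Q : B := (q⁻¹ ^ (n + 1)) • (1 : B) + (qNum q (n + 1)) • r n with hQ
    have hdef : symP q r (n+2) = (qNum q (n + 2))⁻¹ • (S * Q * S) := by
      rw [symP]
    have hq' : q * q⁻¹ = 1 := mul_inv_cancel₀ hq
    have hhk := H.hecke n (by omega)
    -- top generator
    have top : r n * (S * Q * S) = q • (S * Q * S) ∧ (S * Q * S) * r n = q • (S * Q * S) := by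
      rcases n with _ | n
      · have hS1 : S = 1 := by simp [hS, symP]
        have hQ1 : Q = q⁻¹ • (1:B) + r 0 := by simp [hQ, qNum_one h2]
        rw [hS1, one_mul, mul_one, hQ1, mul_add, add_mul, hhk, mul_smul_comm, smul_mul_assoc,
          mul_one, one_mul]
        simp only [smul_add, smul_smul, hq', one_smul]
        constructor <;> module
      · obtain ⟨-, hid0⟩ := IH (n+1) (by omega) (by omega)
        set S0 := symP q r (n+1) with hS0
        set Q0 : B := (q⁻¹ ^ (n + 1)) • (1 : B) + (qNum q (n + 1)) • r n with hQ0
        have hSdef : S = (qNum q (n + 2))⁻¹ • (S0 * Q0 * S0) := by rw [hS, symP]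
        have hc0 : Commute (r (n+1)) S0 :=
          comm_symP _ (fun i hi => (H.far i (n+1) (by omega)).symm)
        have hcQ : Commute Q S0 :=
          ((Commute.one_left _).smul_left _).add_left (hc0.smul_left _)
        have hl : S0 * S = S := by
          rw [hSdef, mul_smul_comm, ← mul_assoc, ← mul_assoc, hid0]
        have hr : S * S0 = S := by
          rw [hSdef, smul_mul_assoc, mul_assoc, hid0]
        have ha := (hab n (by omega)).1
        have ha' := (hab n (by omega)).2
        have hbr := H.braid n (by omega)
        have hnum := qNum_succ hq h2 (n+1)
        -- reduced forms
        have f1 : S * Q * S = (qNum q (n + 2))⁻¹ • (S0 * (Q0 * Q * S)) := by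
          have f0 : S * Q * S = (qNum q (n + 2))⁻¹ • (S0 * Q0 * S0 * Q * S) := by
            rw [← smul_mul_assoc, ← smul_mul_assoc, ← hSdef]
          rw [f0]
          congr 1
          calc S0 * Q0 * S0 * Q * S = S0 * Q0 * (S0 * Q) * S := by simp only [mul_assoc]
            _ = S0 * (Q0 * Q * (S0 * S)) := by rw [← hcQ.eq]; simp only [mul_assoc]
            _ = _ := by rw [hl]
        have f2 : S * Q * S = (qNum q (n + 2))⁻¹ • ((S * Q * Q0) * S0) := by
          calc S * Q * S = (qNum q (n + 2))⁻¹ • (S * Q * (S0 * Q0 * S0)) := by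
                rw [← mul_smul_comm, ← hSdef]
            _ = _ := by
              congr 1
              calc S * Q * (S0 * Q0 * S0) = S * (Q * S0) * Q0 * S0 := by simp only [mul_assoc]
                _ = (S * S0) * Q * Q0 * S0 := by rw [hcQ.eq]; simp only [mul_assoc]
                _ = _ := by rw [hr]
        have g1 : Q0 * Q * S = (q⁻¹^(n+1) * q⁻¹^(n+2) + qNum q (n+1) * q⁻¹^(n+2) * q) • S
            + (q⁻¹^(n+1) * qNum q (n+2)) • (r (n+1) * S)
            + (qNum q (n+1) * qNum q (n+2)) • (r n * r (n+1) * S) := by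
          rw [hQ0, hQ]
          simp only [add_mul, mul_add, smul_mul_assoc, mul_smul_comm, one_mul, mul_one, ha,
            smul_smul, smul_add]
          module
        have g2 : S * Q * Q0 = (q⁻¹^(n+1) * q⁻¹^(n+2) + qNum q (n+1) * q⁻¹^(n+2) * q) • S
            + (q⁻¹^(n+1) * qNum q (n+2)) • (S * r (n+1))
            + (qNum q (n+1) * qNum q (n+2)) • (S * r (n+1) * r n) := by
          rw [hQ0, hQ]
          simp only [add_mul, mul_add, smul_mul_assoc, mul_smul_comm, mul_one, ha',
            smul_smul, smul_add]
          module
        have b1 : r (n+1) * (r n * r (n+1) * S) = q • (r n * r (n+1) * S) := by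
          calc r (n+1) * (r n * r (n+1) * S) = (r (n+1) * r n * r (n+1)) * S := by
                simp only [mul_assoc]
            _ = r n * r (n+1) * (r n * S) := by rw [← hbr]; simp only [mul_assoc]
            _ = _ := by rw [ha, mul_smul_comm]
        have b2 : (S * r (n+1) * r n) * r (n+1) = q • (S * r (n+1) * r n) := by
          calc (S * r (n+1) * r n) * r (n+1) = S * (r (n+1) * r n * r (n+1)) := by
                simp only [mul_assoc]
            _ = (S * r n) * r (n+1) * r n := by rw [← hbr]; simp only [mul_assoc]
            _ = _ := by rw [ha']; simp only [smul_mul_assoc]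
        have c1 : r (n+1) * (r (n+1) * S) = (q - q⁻¹) • (r (n+1) * S) + S := by
          rw [← mul_assoc, hhk, add_mul, one_mul, smul_mul_assoc]
        have c2 : (S * r (n+1)) * r (n+1) = (q - q⁻¹) • (S * r (n+1)) + S := by
          rw [mul_assoc, hhk, mul_add, mul_one, mul_smul_comm]
        have k1 : r (n+1) * (Q0 * Q * S) = q • (Q0 * Q * S) := by
          rw [g1]
          simp only [mul_add, mul_smul_comm, b1, c1]
          rw [hnum]
          match_scalars
          all_goals first
            | ring1
            | linear_combination
                -((q⁻¹^(n+1))^2 + q * qNum q (n+1) * q⁻¹^(n+1)) * hq'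
        have k2 : (S * Q * Q0) * r (n+1) = q • (S * Q * Q0) := by
          rw [g2]
          simp only [add_mul, smul_mul_assoc, b2, c2]
          rw [hnum]
          match_scalars
          all_goals first
            | ring1
            | linear_combination
                -((q⁻¹^(n+1))^2 + q * qNum q (n+1) * q⁻¹^(n+1)) * hq'
        constructor
        · rw [f1, mul_smul_comm, ← mul_assoc, hc0.eq, mul_assoc, k1, mul_smul_comm,
            smul_comm]
        · rw [f2, smul_mul_assoc, mul_assoc _ S0, ← hc0.eq, ← mul_assoc, k2, smul_mul_assoc,
            smul_comm]
    have habs : ∀ i, i + 1 < n + 2 → r i * symP q r (n+2) = q • symP q r (n+2) ∧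
        symP q r (n+2) * r i = q • symP q r (n+2) := by
      intro i hi
      rw [hdef, mul_smul_comm, smul_mul_assoc]
      rcases Nat.lt_or_ge (i+1) (n+1) with h | h
      · obtain ⟨x1, x2⟩ := hab i h
        constructor
        · rw [← mul_assoc, ← mul_assoc, x1, smul_mul_assoc, smul_mul_assoc, smul_comm]
        · rw [mul_assoc, x2, mul_smul_comm, smul_comm]
      · obtain rfl : i = n := by omega
        rw [top.1, top.2, smul_comm]
        exact ⟨rfl, rfl⟩
    refine ⟨habs, ?_⟩
    have hl : S * symP q r (n+2) = symP q r (n+2) := by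
      rw [hdef, mul_smul_comm, ← mul_assoc, ← mul_assoc, hid]
    have hQE : Q * symP q r (n+2) = qNum q (n+2) • symP q r (n+2) := by
      rw [hQ, add_mul, smul_mul_assoc, smul_mul_assoc, (habs n (by omega)).1, one_mul,
        qNum_succ hq h2 (n+1)]
      module
    conv_lhs => enter [1]; rw [hdef]
    rw [smul_mul_assoc, mul_assoc, hl, mul_assoc, hQE, mul_smul_comm, hl, smul_smul,
      inv_mul_cancel₀ hne, one_smul]

theorem CapData.main (T : CapData q K r ri m d) (hq : q ≠ 0) (h2 : q - q⁻¹ ≠ 0)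
    (hK : ∀ j, 2 ≤ j → j ≤ K → qNum q j ≠ 0) :
    ∀ n, n ≤ K → symP q r n * cpP q m d n * symP q r n
      = q⁻¹ ^ (n * (n-1)) • (symP q r n * upP m n * dnP d n) := by
  have props := T.H.symP_props hq h2 hK
  intro n
  induction n with
  | zero => intro _; simp [symP, cpP, upP, dnP]
  | succ n ih =>
    intro hn
    have IH := ih (by omega)
    set S := symP q r n with hS
    set E := symP q r (n+1) with hE
    obtain ⟨hES, hSE⟩ : E * S = E ∧ S * E = E := symP_succ_absorb (fun n _ h => (props n h).2) n (by omega)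
    have habs := (props (n+1) hn).1
    have hid : E * E = E := (props (n+1) hn).2
    have hkey := T.key hq h2 E n (by omega) (fun i hi => (habs i (by omega)).1)
    have hcL : Commute (m n * d n - cf q n • (1:B)) S := by
      refine comm_symP n (fun i hi => Commute.sub_left (Commute.mul_left ?_ ?_)
        ((Commute.one_left _).smul_left _))
      · exact (T.H.comm_lo T.Mc i n hi (by omega)).symm
      · exact (T.H.comm_lo T.Dc i n hi (by omega)).symm
    have hcM : Commute (upP m (n+1)) E :=
      comm_symP _ (fun i hi => (T.up_comm (n+1) hn i hi).symm)
    have hcD : Commute (dnP d (n+1)) E :=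
      comm_symP _ (fun i hi => (T.dn_comm (n+1) hn i hi).symm)
    have hstep : dnP d n * (m n * d n - cf q n • (1:B)) * E
        = q⁻¹ ^ (2*n) • (m n * dnP d (n+1) * E) := by
      rw [mul_sub, sub_mul, hkey, mul_smul_comm, mul_one, smul_mul_assoc]
      abel
    calc E * cpP q m d (n+1) * E
        = (E * S) * cpP q m d n * (m n * d n - cf q n • (1:B)) * (S * E) := by
          rw [hES, hSE, cpP]; simp only [mul_assoc]
      _ = E * (S * cpP q m d n * ((m n * d n - cf q n • (1:B)) * S)) * E := by
          simp only [mul_assoc]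
      _ = E * (S * cpP q m d n * S) * (m n * d n - cf q n • (1:B)) * E := by
          rw [hcL.eq]; simp only [mul_assoc]
      _ = q⁻¹ ^ (n * (n-1)) • (E * S * upP m n *
            (dnP d n * (m n * d n - cf q n • (1:B)) * E)) := by
          rw [IH]; simp only [mul_smul_comm, smul_mul_assoc, mul_assoc]
      _ = (q⁻¹ ^ (n * (n-1)) * q⁻¹ ^ (2*n)) • (E * upP m (n+1) * (dnP d (n+1) * E)) := by
          rw [hstep, hES, mul_smul_comm, smul_smul, upP]; simp only [mul_assoc]
      _ = (q⁻¹ ^ (n * (n-1)) * q⁻¹ ^ (2*n)) • (E * (upP m (n+1) * E) * dnP d (n+1)) := by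
          rw [hcD.eq]; simp only [mul_assoc]
      _ = (q⁻¹ ^ (n * (n-1)) * q⁻¹ ^ (2*n)) • (E * E * upP m (n+1) * dnP d (n+1)) := by
          rw [hcM.eq]; simp only [mul_assoc]
      _ = _ := by
          rw [hid, ← pow_add]
          congr 2
          rcases n with _ | n
          · rfl
          · simp only [Nat.add_sub_cancel]; ring

end AbstractCapelli
section Embeddings

variable {N : ℕ}

/-- Embedding of a `p`-fold tensor matrix in the tensor factors picked by `σ`. -/
def embPhi {p k : ℕ} {A : Type*} [Ring A] (σ : Fin p → Fin k) (X : TMat N p A) : TMat N k A :=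
  fun f g => if ∀ j, j ∉ Set.range σ → f j = g j then X (f ∘ σ) (g ∘ σ) else 0

/-- Replace the values of `f` on the range of `σ` by `x`. -/
def ovr {p k : ℕ} (σ : Fin p → Fin k) (f : Fin k → Fin N) (x : Fin p → Fin N) : Fin k → Fin N :=
  Function.extend σ x f

theorem embPhi_mul {p k : ℕ} {A : Type*} [Ring A] {σ : Fin p → Fin k}
    (hσ : Function.Injective σ) (X Y : TMat N p A) :
    embPhi σ (X * Y) = embPhi σ X * embPhi σ Y := by
  classical
  ext f g
  rw [Matrix.mul_apply]
  by_cases hfg : ∀ j, j ∉ Set.range σ → f j = g j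
  · rw [embPhi, if_pos hfg, Matrix.mul_apply]
    have hsub : ∑ h : Fin k → Fin N, embPhi σ X f h * embPhi σ Y h g
        = ∑ h ∈ Finset.univ.filter (fun h : Fin k → Fin N => ∀ j, j ∉ Set.range σ → f j = h j),
            embPhi σ X f h * embPhi σ Y h g := by
      symm
      apply Finset.sum_subset (Finset.filter_subset _ _)
      intro h _ hh
      simp only [Finset.mem_filter, Finset.mem_univ, true_and] at hh
      simp only [embPhi, if_neg hh, zero_mul]
    rw [hsub]
    refine Finset.sum_bij' (fun x _ => ovr σ f x) (fun h _ => h ∘ σ) ?_ ?_ ?_ ?_ ?_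
    · intro x _
      simp only [Finset.mem_filter, Finset.mem_univ, true_and]
      intro j hj
      exact (Function.extend_apply' _ _ _ hj).symm
    · intro h _; exact Finset.mem_univ _
    · intro x _
      exact Function.extend_comp hσ _ _
    · intro h hh
      simp only [Finset.mem_filter, Finset.mem_univ, true_and] at hh
      funext j
      by_cases hj : j ∈ Set.range σ
      · obtain ⟨a, rfl⟩ := hj
        exact hσ.extend_apply _ _ a
      · rw [ovr, Function.extend_apply' _ _ _ hj]; exact hh j hj
    · intro x _
      have e : ovr σ f x ∘ σ = x := Function.extend_comp hσ _ _
      have h1 : ∀ j, j ∉ Set.range σ → f j = ovr σ f x j := fun j hj =>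
        (Function.extend_apply' _ _ _ hj).symm
      have h2 : ∀ j, j ∉ Set.range σ → ovr σ f x j = g j := fun j hj =>
        (h1 j hj).symm.trans (hfg j hj)
      rw [embPhi, embPhi, if_pos h1, if_pos h2, e]
  · rw [embPhi, if_neg hfg]
    symm
    apply Finset.sum_eq_zero
    intro h _
    simp only [embPhi]
    split_ifs with h1 h2
    · exact absurd (fun j hj => (h1 j hj).trans (h2 j hj)) hfg
    all_goals simp

theorem embPhi_one {p k : ℕ} {A : Type*} [Ring A] (σ : Fin p → Fin k) :
    embPhi σ (1 : TMat N p A) = 1 := by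
  classical
  ext f g
  rw [embPhi]
  by_cases h : f = g
  · subst h; simp
  · rw [Matrix.one_apply_ne h]
    split_ifs with h1
    · apply Matrix.one_apply_ne
      intro h2
      apply h
      funext j
      by_cases hj : j ∈ Set.range σ
      · obtain ⟨a, rfl⟩ := hj
        exact congrFun h2 a
      · exact h1 j hj
    · rfl

theorem embPhi_add {p k : ℕ} {A : Type*} [Ring A] (σ : Fin p → Fin k) (X Y : TMat N p A) :
    embPhi σ (X + Y) = embPhi σ X + embPhi σ Y := by
  ext f g
  simp only [embPhi, Matrix.add_apply]
  split_ifs <;> simp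

theorem embPhi_smul {p k : ℕ} {A : Type*} [Ring A] [Algebra ℂ A] (σ : Fin p → Fin k) (c : ℂ)
    (X : TMat N p A) : embPhi σ (c • X) = c • embPhi σ X := by
  ext f g
  simp only [embPhi, Matrix.smul_apply]
  split_ifs <;> simp

theorem embPhi_lift {p k : ℕ} {A : Type*} [Ring A] [Algebra ℂ A] (σ : Fin p → Fin k)
    (X : TMat N p ℂ) : embPhi σ (liftC A X) = liftC A (embPhi σ X) := by
  ext f g
  simp only [embPhi, liftC, Matrix.map_apply]
  split_ifs <;> simp

theorem embPhi_mul_apply {p p' k : ℕ} {A : Type*} [Ring A] {σ : Fin p → Fin k}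
    {τ : Fin p' → Fin k} (hd : ∀ a b, σ a ≠ τ b) (hσ : Function.Injective σ)
    (X : TMat N p A) (Y : TMat N p' A) (f g : Fin k → Fin N) :
    (embPhi σ X * embPhi τ Y) f g =
      if ∀ j, j ∉ Set.range σ → j ∉ Set.range τ → f j = g j then
        X (f ∘ σ) (g ∘ σ) * Y (f ∘ τ) (g ∘ τ) else 0 := by
  classical
  rw [Matrix.mul_apply]
  have e1 : ovr σ f (g ∘ σ) ∘ σ = g ∘ σ := Function.extend_comp hσ _ _
  have e0 : ∀ j, j ∉ Set.range σ → ovr σ f (g ∘ σ) j = f j := fun j hj =>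
    Function.extend_apply' _ _ _ hj
  have e2 : ovr σ f (g ∘ σ) ∘ τ = f ∘ τ := by
    funext b
    exact e0 _ (fun ⟨a, ha⟩ => hd a b ha)
  rw [Finset.sum_eq_single (ovr σ f (g ∘ σ))]
  · have h1 : ∀ j, j ∉ Set.range σ → f j = ovr σ f (g ∘ σ) j := fun j hj => (e0 j hj).symm
    rw [embPhi, if_pos h1, e1, embPhi, e2]
    by_cases h : ∀ j, j ∉ Set.range σ → j ∉ Set.range τ → f j = g j
    · rw [if_pos h, if_pos]
      intro j hj
      by_cases hs : j ∈ Set.range σ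
      · obtain ⟨a, rfl⟩ := hs
        exact congrFun e1 a
      · rw [e0 j hs]; exact h j hs hj
    · rw [if_neg h, if_neg, mul_zero]
      intro h2
      exact h (fun j hs ht => (e0 j hs).symm.trans (h2 j ht))
  · intro h _ hne
    simp only [embPhi]
    split_ifs with h1 h2
    · exfalso
      apply hne
      funext j
      by_cases hs : j ∈ Set.range σ
      · have ht : j ∉ Set.range τ := by
          rintro ⟨b, rfl⟩
          obtain ⟨a, ha⟩ := hs
          exact hd a b ha
        rw [h2 j ht]
        obtain ⟨a, rfl⟩ := hs
        exact (congrFun e1 a).symm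
      · rw [e0 j hs]; exact (h1 j hs).symm
    all_goals simp
  · intro h; exact absurd (Finset.mem_univ _) h

theorem embPhi_commute {p p' k : ℕ} {A : Type*} [Ring A] {σ : Fin p → Fin k}
    {τ : Fin p' → Fin k} (hd : ∀ a b, σ a ≠ τ b) (hσ : Function.Injective σ)
    (hτ : Function.Injective τ)
    (X : TMat N p A) (Y : TMat N p' A) (hXY : ∀ a b c d, Commute (X a b) (Y c d)) :
    Commute (embPhi σ X) (embPhi τ Y) := by
  show _ = _
  ext f g
  rw [embPhi_mul_apply hd hσ, embPhi_mul_apply (fun a b => (hd b a).symm) hτ]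
  rw [(hXY _ _ _ _).eq]
  have : (∀ j, j ∉ Set.range σ → j ∉ Set.range τ → f j = g j) ↔
    (∀ j, j ∉ Set.range τ → j ∉ Set.range σ → f j = g j) := by
    constructor <;> exact fun h j a b => h j b a
  simp only [this]

/-- Shifted inclusion of tensor factors. -/
def shf {p k : ℕ} (i : ℕ) (h : i + p ≤ k) : Fin p → Fin k := fun a => ⟨i + a, by omega⟩

theorem shf_inj {p k : ℕ} (i : ℕ) (h : i + p ≤ k) : Function.Injective (shf i h) := by
  intro a b hab
  simp only [shf, Fin.mk.injEq] at hab
  exact Fin.ext (by omega)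

theorem mem_shf {p k : ℕ} (i : ℕ) (h : i + p ≤ k) (j : Fin k) :
    j ∈ Set.range (shf i h) ↔ i ≤ j.val ∧ j.val < i + p := by
  constructor
  · rintro ⟨a, rfl⟩; simp only [shf]; omega
  · rintro ⟨h1, h2⟩
    exact ⟨⟨j.val - i, by omega⟩, Fin.ext (by simp only [shf]; omega)⟩

theorem embPhi_embR {p k : ℕ} (R : RMat N) (i a : ℕ) (h : i + p ≤ k) (ha : a + 1 < p) :
    embPhi (shf i h) (embR p R a) = embR k R (i + a) := by
  ext f g
  have hk : i + a + 1 < k := by omega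
  simp only [embPhi, embR, dif_pos ha, dif_pos hk]
  by_cases hc : ∀ j : Fin k, j.val ≠ i + a → j.val ≠ i + a + 1 → f j = g j
  · rw [if_pos hc, if_pos, if_pos]
    · rfl
    · intro j h1 h2
      exact hc _ (by simp only [shf]; omega) (by simp only [shf]; omega)
    · intro j hj
      rw [mem_shf] at hj
      exact hc j (by omega) (by omega)
  · rw [if_neg hc]
    split_ifs with h1 h2
    · exfalso
      apply hc
      intro j hj1 hj2
      by_cases hj : j ∈ Set.range (shf i h)
      · obtain ⟨b, rfl⟩ := hj
        simp only [shf] at hj1 hj2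
        exact h2 b (by omega) (by omega)
      · exact h1 j hj
    all_goals rfl

theorem embPhi_emb1 {p k : ℕ} {A : Type*} [Ring A] (X : Matrix (Fin N) (Fin N) A)
    (h : 0 + p ≤ k) (hp : 0 < p) :
    embPhi (shf 0 h) (emb1 p X) = emb1 k X := by
  ext f g
  have hk : 0 < k := by omega
  simp only [embPhi, emb1, dif_pos hp, dif_pos hk]
  by_cases hc : ∀ j : Fin k, j.val ≠ 0 → f j = g j
  · rw [if_pos hc, if_pos, if_pos]
    · rfl
    · intro j h1
      exact hc _ (by simp only [shf]; omega)
    · intro j hj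
      rw [mem_shf] at hj
      exact hc j (by omega)
  · rw [if_neg hc]
    split_ifs with h1 h2
    · exfalso
      apply hc
      intro j hj1
      by_cases hj : j ∈ Set.range (shf 0 h)
      · obtain ⟨b, rfl⟩ := hj
        simp only [shf] at hj1
        exact h2 b (by omega)
      · exact h1 j hj
    all_goals rfl

theorem embR_two (R : RMat N) :
    embR 2 R 0 = R.submatrix (finTwoArrowEquiv (Fin N)) (finTwoArrowEquiv (Fin N)) := by
  ext f g
  simp only [embR, Matrix.submatrix_apply]
  rw [dif_pos (by norm_num), if_pos]
  · rfl
  · intro j h1 h2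
    omega

theorem emb1_one (A : Type*) [Ring A] (X : Matrix (Fin N) (Fin N) A) :
    emb1 1 X = X.submatrix (Equiv.funUnique (Fin 1) (Fin N)) (Equiv.funUnique (Fin 1) (Fin N)) := by
  ext f g
  simp only [emb1, Matrix.submatrix_apply]
  rw [dif_pos (by norm_num), if_pos]
  · rfl
  · intro j h1
    omega

theorem embR_eq {k : ℕ} (R : RMat N) (i : ℕ) (h : i + 2 ≤ k) :
    embR k R i = embPhi (shf i h) (embR 2 R 0) :=
  (embPhi_embR R i 0 h (by omega)).symm

theorem embR_mul {k : ℕ} (X Y : RMat N) (i : ℕ) (h : i + 1 < k) :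
    embR k (X * Y) i = embR k X i * embR k Y i := by
  have e : ∀ Z : RMat N, embR k Z i = embPhi (shf i (p := 2) (by omega)) (embR 2 Z 0) :=
    fun Z => (embPhi_embR Z i 0 _ (by omega)).symm
  rw [e, e, e, ← embPhi_mul (shf_inj _ _), embR_two, embR_two, embR_two,
    Matrix.submatrix_mul_equiv]

theorem embR_one {k : ℕ} (i : ℕ) : embR k (1 : RMat N) i = 1 := by
  by_cases h : i + 1 < k
  · rw [embR_eq _ i (by omega), embR_two,
      Matrix.submatrix_one_equiv, embPhi_one]
  · ext f g
    simp only [embR, dif_neg h]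

theorem embR_big {k : ℕ} (R : RMat N) (i : ℕ) (h : ¬ i + 1 < k) : embR k R i = 1 := by
  ext f g
  simp only [embR, dif_neg h]

theorem embR_add {k : ℕ} (X Y : RMat N) (i : ℕ) (h : i + 1 < k) :
    embR k (X + Y) i = embR k X i + embR k Y i := by
  ext f g
  simp only [embR, dif_pos h, Matrix.add_apply]
  split_ifs <;> simp

theorem embR_smul {k : ℕ} (c : ℂ) (X : RMat N) (i : ℕ) (h : i + 1 < k) :
    embR k (c • X) i = c • embR k X i := by
  ext f g
  simp only [embR, dif_pos h, Matrix.smul_apply]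
  split_ifs <;> simp

theorem emb1_mul {k : ℕ} {A : Type*} [Ring A] (hk : 0 < k) (X Y : Matrix (Fin N) (Fin N) A) :
    emb1 k (X * Y) = emb1 k X * emb1 k Y := by
  have e : ∀ Z : Matrix (Fin N) (Fin N) A,
      emb1 k Z = embPhi (shf 0 (p := 1) (by omega)) (emb1 1 Z) :=
    fun Z => (embPhi_emb1 Z _ (by omega)).symm
  rw [e, e, e, ← embPhi_mul (shf_inj _ _), emb1_one, emb1_one, emb1_one,
    Matrix.submatrix_mul_equiv]

variable {A : Type*} [Ring A] [Algebra ℂ A]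

theorem liftC_mul {k : ℕ} (X Y : TMat N k ℂ) : liftC A (X * Y) = liftC A X * liftC A Y :=
  Matrix.map_mul

theorem liftC_one {k : ℕ} : liftC A (1 : TMat N k ℂ) = 1 :=
  Matrix.map_one _ (map_zero _) (map_one _)

theorem liftC_add {k : ℕ} (X Y : TMat N k ℂ) : liftC A (X + Y) = liftC A X + liftC A Y := by
  ext f g
  simp [liftC]

theorem liftC_smul {k : ℕ} (c : ℂ) (X : TMat N k ℂ) : liftC A (c • X) = c • liftC A X := by
  ext f g
  simp only [liftC, Matrix.map_apply, Matrix.smul_apply, smul_eq_mul, map_mul]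
  rw [Algebra.smul_def]

theorem embR_far {k : ℕ} (R : RMat N) (i j : ℕ) (h : i + 1 < j) :
    Commute (embR k R i) (embR k R j) := by
  by_cases hj : j + 1 < k
  · rw [embR_eq R i (by omega),
      embR_eq R j (by omega)]
    refine embPhi_commute ?_ (shf_inj _ _) (shf_inj _ _) _ _ (fun _ _ _ _ => Commute.all _ _)
    intro a b hab
    simp only [shf, Fin.mk.injEq] at hab
    omega
  · rw [embR_big R j hj]; exact Commute.one_right _

theorem embR_emb1_comm {k : ℕ} (R : RMat N) (X : Matrix (Fin N) (Fin N) A) (i : ℕ)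
    (h : 1 ≤ i) : Commute (liftC A (embR k R i)) (emb1 k X) := by
  by_cases hi : i + 1 < k
  · rw [embR_eq R i (by omega), ← embPhi_lift,
      ← embPhi_emb1 (p := 1) X (by omega) (by omega)]
    refine embPhi_commute ?_ (shf_inj _ _) (shf_inj _ _) _ _
      (fun _ _ _ _ => Algebra.commutes _ _)
    intro a b hab
    simp only [shf, Fin.mk.injEq] at hab
    omega
  · rw [embR_big R i hi, liftC_one]; exact Commute.one_left _

end Embeddings
section Assemble

variable {N : ℕ} {A : Type*} [Ring A] [Algebra ℂ A]

theorem capData_of {R Rinv : RMat N} {q : ℂ} (hq0 : q ≠ 0)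
    (hinv : R * Rinv = 1) (hinv' : Rinv * R = 1)
    (hbr : IsBraiding R) (hH : HeckeCond R q)
    (M D : Matrix (Fin N) (Fin N) A)
    (hRE : RERel R M) (hDD : DDRel Rinv D) (hperm : PermRel R Rinv M D) (k : ℕ) :
    CapData (B := TMat N k A) q k (fun i => liftC A (embR k R i))
      (fun i => liftC A (embR k Rinv i)) (copyX k R Rinv M) (copyX k R Rinv D) := by
  have hinvk : ∀ X Y : RMat N, X * Y = 1 → ∀ i,
      liftC A (embR k X i) * liftC A (embR k Y i) = 1 := by
    intro X Y hXY i
    rw [← liftC_mul]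
    by_cases h : i + 1 < k
    · rw [← embR_mul _ _ _ h, hXY, embR_one, liftC_one]
    · rw [embR_big _ _ h, embR_big _ _ h, one_mul, liftC_one]
  have e2 : ∀ (X : RMat N) (h : 0 + 2 ≤ k),
      embPhi (shf 0 h) (liftC A (embR 2 X 0)) = liftC A (embR k X 0) := by
    intro X h
    rw [embPhi_lift, embPhi_embR X 0 0 h (by omega)]
  have f2 : ∀ (X : Matrix (Fin N) (Fin N) A) (h : 0 + 2 ≤ k),
      embPhi (shf 0 h) (emb1 2 X) = emb1 k X := fun X h => embPhi_emb1 X h (by omega)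
  refine ⟨⟨hinvk _ _ hinv, hinvk _ _ hinv', ?_, ?_, ?_⟩,
    ⟨fun i => rfl, fun i hi => embR_emb1_comm R M i hi⟩,
    ⟨fun i => rfl, fun i hi => embR_emb1_comm R D i hi⟩, ?_, ?_, ?_⟩
  · intro i hi
    simp only [← liftC_mul]
    congr 1
    have h := congrArg (embPhi (shf i (p := 3) (k := k) (by omega))) hbr
    simp only [embPhi_mul (shf_inj _ _)] at h
    rwa [embPhi_embR R i 0 _ (by omega), embPhi_embR R i 1 _ (by omega)] at h
  · intro i j h
    show _ = _
    simp only [← liftC_mul]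
    rw [(embR_far R i j h).eq]
  · intro i hi
    have h : R * R = (q - q⁻¹) • R + 1 := by
      have h0 : (q • (1 : RMat N) - R) * (q⁻¹ • (1 : RMat N) + R) = 0 := hH
      have h1 : (q • (1 : RMat N) - R) * (q⁻¹ • (1 : RMat N) + R)
          = (q * q⁻¹) • (1 : RMat N) + (q - q⁻¹) • R - R * R := by
        simp only [sub_mul, mul_add, smul_mul_assoc, mul_smul_comm, one_mul, mul_one]
        module
      rw [h1, mul_inv_cancel₀ hq0, one_smul, sub_eq_zero] at h0
      rw [← h0, add_comm]
    simp only [← liftC_mul]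
    rw [← embR_mul _ _ _ hi, h, embR_add _ _ _ hi, embR_smul _ _ _ hi, embR_one, liftC_add,
      liftC_smul, liftC_one]
  · intro hk
    have h := congrArg (embPhi (shf 0 (p := 2) (k := k) (by omega))) hRE
    simp only [embPhi_mul (shf_inj _ _), e2, f2] at h
    exact h
  · intro hk
    have h := congrArg (embPhi (shf 0 (p := 2) (k := k) (by omega))) hDD
    simp only [embPhi_mul (shf_inj _ _), e2, f2] at h
    exact h
  · intro hk
    have h := congrArg (embPhi (shf 0 (p := 2) (k := k) (by omega))) hperm
    simp only [embPhi_mul (shf_inj _ _), embPhi_add, embPhi_one, e2, f2] at h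
    exact h

theorem liftC_Ssym (R : RMat N) (q : ℂ) (k : ℕ) : ∀ n,
    liftC A (Ssym k R q n) = symP q (fun i => liftC A (embR k R i)) n
  | 0 => liftC_one
  | 1 => liftC_one
  | n+2 => by
    rw [Ssym, symP, liftC_smul, liftC_mul, liftC_mul, liftC_add, liftC_smul, liftC_smul,
      liftC_one, liftC_Ssym R q k (n+1)]

theorem upChain_eq (k : ℕ) (R Rinv : RMat N) (X : Matrix (Fin N) (Fin N) A) (n : ℕ) :
    upChain k R Rinv X n = upP (copyX k R Rinv X) n := by
  induction n with
  | zero => rfl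
  | succ n ih =>
    rw [upP, ← ih]
    simp only [upChain, List.range_succ, List.map_append, List.prod_append, List.map_cons,
      List.map_nil, List.prod_singleton]

theorem downChain_eq (k : ℕ) (R Rinv : RMat N) (X : Matrix (Fin N) (Fin N) A) (n : ℕ) :
    downChain k R Rinv X n = dnP (copyX k R Rinv X) n := by
  induction n with
  | zero => rfl
  | succ n ih =>
    rw [dnP, ← ih]
    simp only [downChain, List.range_succ, List.reverse_append, List.reverse_singleton,
      List.map_append, List.prod_append, List.map_cons, List.map_nil, List.prod_singleton]

theorem copyX_mul {k : ℕ} (hk : 0 < k) {R Rinv : RMat N} (hinv' : Rinv * R = 1)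
    (X Y : Matrix (Fin N) (Fin N) A) (i : ℕ) :
    copyX k R Rinv (X * Y) i = copyX k R Rinv X i * copyX k R Rinv Y i := by
  induction i with
  | zero => exact emb1_mul hk X Y
  | succ i ih =>
    have h : liftC A (embR k Rinv i) * liftC A (embR k R i) = 1 := by
      rw [← liftC_mul]
      by_cases h : i + 1 < k
      · rw [← embR_mul _ _ _ h, hinv', embR_one, liftC_one]
      · rw [embR_big _ _ h, embR_big _ _ h, one_mul, liftC_one]
    rw [copyX, copyX, copyX, ih]
    generalize liftC A (embR k Rinv i) = b at *
    generalize liftC A (embR k R i) = a at *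
    calc a * (copyX k R Rinv X i * copyX k R Rinv Y i) * b
        = a * copyX k R Rinv X i * 1 * copyX k R Rinv Y i * b := by
          rw [mul_one]; simp only [mul_assoc]
      _ = _ := by rw [← h]; simp only [mul_assoc]

theorem capChainS_eq {k : ℕ} (hk : 0 < k) {R Rinv : RMat N} (hinv' : Rinv * R = 1) (q : ℂ)
    (X Y : Matrix (Fin N) (Fin N) A) (n : ℕ) :
    capChainS k R Rinv q (X * Y) n = cpP q (copyX k R Rinv X) (copyX k R Rinv Y) n := by
  induction n with
  | zero => rfl
  | succ n ih =>
    rw [cpP, ← ih, ← copyX_mul hk hinv', cf]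
    simp only [capChainS, List.range_succ, List.map_append, List.prod_append, List.map_cons,
      List.map_nil, List.prod_singleton]

end Assemble

/-- matrix Capelli identity, symmetric form:
`S^(k) L_{1̄}(L_{2̄}−q⁻¹I)⋯(L_{k̄}−q^{−(k−1)}(k−1)_q I) S^(k)
  = q^{−k(k−1)} S^(k) M_{1̄}⋯M_{k̄} D_{k̄}⋯D_{1̄}`, with `L = MD`. -/
theorem statement3 {N : ℕ} (R Rinv : RMat N) (q : ℂ)
    (hq0 : q ≠ 0) (hq1 : q ≠ 1) (hqm1 : q ≠ -1)
    (hinv : R * Rinv = 1) (hinv' : Rinv * R = 1)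
    (hbr : IsBraiding R) (hH : HeckeCond R q)
    {A : Type _} [Ring A] [Algebra ℂ A]
    (M D : Matrix (Fin N) (Fin N) A)
    (hRE : RERel R M) (hDD : DDRel Rinv D) (hperm : PermRel R Rinv M D) :
    ∀ k : ℕ, 1 ≤ k → (∀ j : ℕ, 2 ≤ j → j ≤ k → qNum q j ≠ 0) →
      liftC A (Ssym k R q k) * capChainS k R Rinv q (M * D) k * liftC A (Ssym k R q k)
        = (q⁻¹ ^ (k * (k - 1))) •
            (liftC A (Ssym k R q k) * upChain k R Rinv M k * downChain k R Rinv D k) := by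
  intro k hk hnum
  have h2 : q - q⁻¹ ≠ 0 := by
    intro h
    have h3 : q * q = 1 := by
      rw [sub_eq_zero] at h
      calc q * q = q * q⁻¹ := by rw [← h]
        _ = 1 := mul_inv_cancel₀ hq0
    rcases mul_self_eq_one_iff.mp h3 with h | h
    · exact hq1 h
    · exact hqm1 h
  have T := capData_of hq0 hinv hinv' hbr hH M D hRE hDD hperm k
  have main := T.main hq0 h2 hnum k le_rfl
  rw [liftC_Ssym, upChain_eq, downChain_eq, capChainS_eq hk hinv']
  exact main
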